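/- Let $(\Omega, \mathcal{F})$ carry probability measures $\tilde{p}_0 \ll p_0$ with $D(\tilde{p}_0 \,\|\, p_0) < \infty$. Let $W_{obs} : \Omega \to \mathbb{R}$ be a random variable (representing $Y w_{obs}$) with $W_{obs}^2$ integrable under both measures, and suppose there exists $\nu_1 > 0$ such that $\log \mathbb{E}_{p_0}[\exp(\lambda(W_{obs}^2 - \mathbb{E}_{p_0}[W_{obs}^2]))] \le \nu_1 \lambda^2 / 2$ for all $\lambda > 0$. Then the variance under the extrapolated distribution satisfies $\mathrm{Var}_{\tilde{p}_0}[W_{obs}] \le \mathbb{E}_{p_0}[W_{obs}^2] + \sqrt{2 \nu_1 \, D(\tilde{p}_0 \,\|\, p_0)}$. -/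

import Mathlib

open MeasureTheory ProbabilityTheory Real

/-- The Kullback–Leibler divergence `D(Q ‖ P) = ∫ log (dQ/dP) dQ` (real-valued). -/
noncomputable def klDiv {Ω : Type*} [MeasurableSpace Ω] (Q P : Measure Ω) : ℝ :=
  ∫ x, Real.log ((Q.rnDeriv P) x).toReal ∂Q

/-!
The variance is at most the second moment, so it suffices to compare `∫ W² ∂Q` with `∫ W² ∂P`.
Gibbs' inequality for `Q` against the exponentially tilted measure `P.tilted (t Z)` gives the
Donsker–Varadhan inequality `∫ t Z ∂Q ≤ D(Q ‖ P) + log ∫ exp (t Z) ∂P`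
(`integral_le_klDiv_add_log_integral_exp`). With `Z = W² - ∫ W² ∂P` and `a = ∫ Z ∂Q`, the
sub-Gaussian bound turns this into `t a ≤ D(Q ‖ P) + ν t² / 2` for all `t > 0`; when `a > 0` the
optimal choice `t = a / ν` yields `a² ≤ 2 ν D(Q ‖ P)`.
-/

/-- The Donsker–Varadhan inequality: it is nonnegativity of the divergence of `Q` from the tilted
measure `P.tilted f`. -/
lemma integral_le_klDiv_add_log_integral_exp {Ω : Type*} [MeasurableSpace Ω] {Q P : Measure Ω}
    [IsProbabilityMeasure Q] [IsProbabilityMeasure P] (hac : Q ≪ P)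
    (hkl : Integrable (llr Q P) Q) {f : Ω → ℝ} (hfQ : Integrable f Q)
    (hfP : Integrable (fun x => Real.exp (f x)) P) :
    ∫ x, f x ∂Q ≤ klDiv Q P + Real.log (∫ x, Real.exp (f x) ∂P) := by
  have : IsProbabilityMeasure (P.tilted f) := isProbabilityMeasure_tilted hfP
  have h := InformationTheory.integral_llr_add_sub_measure_univ_nonneg
    (hac.trans (absolutelyContinuous_tilted hfP))
    (integrable_llr_tilted_right hac hfQ hkl hfP)
  rw [integral_llr_tilted_right hac hfQ hfP hkl] at h
  simp only [probReal_univ] at h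
  have hD : klDiv Q P = ∫ x, llr Q P x ∂Q := rfl
  linarith

/-- The variance is at most the second moment, with no measurability assumption: if `X` is not
a.e. strongly measurable then its Bochner integral is `0`, and the variance equals the second
moment as soon as `X ^ 2` is integrable. -/
lemma variance_le_integral_sq {Ω : Type*} [MeasurableSpace Ω] {Q : Measure Ω}
    [IsProbabilityMeasure Q] {X : Ω → ℝ} (hX : Integrable (fun ω => X ω ^ 2) Q) :
    variance X Q ≤ ∫ ω, X ω ^ 2 ∂Q := by
  by_cases hm : AEStronglyMeasurable X Q
  · exact variance_le_expectation_sq hm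
  · have h0 : ∫ ω, X ω ∂Q = 0 := integral_undef fun h => hm h.aestronglyMeasurable
    rw [integral_eq_lintegral_of_nonneg_ae (ae_of_all _ fun ω => sq_nonneg _)
      hX.aestronglyMeasurable, variance, evariance, h0]
    refine le_of_eq ?_
    congr 1
    refine lintegral_congr fun ω => ?_
    rw [sub_zero, Real.enorm_eq_ofReal_abs, ← ENNReal.ofReal_pow (abs_nonneg _), sq_abs]

/-- Variance bound for the embedded permutation weighting estimator: if
`W_obs = Y w_obs` has square integrable under both the true logging distribution `p₀` and
the extrapolated logging distribution `p̃₀`, and `W_obs²` satisfies a sub-Gaussian moment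
generating function bound under `p₀`, then the variance under `p̃₀` satisfies
`Var_{p̃₀}[W_obs] ≤ E_{p₀}[W_obs²] + √(2 ν₁ D(p̃₀ ‖ p₀))`. -/
theorem variance_bound_embedded_pw
    {Ω : Type*} [MeasurableSpace Ω] (p0t p0 : Measure Ω)
    [IsProbabilityMeasure p0t] [IsProbabilityMeasure p0]
    (hac : p0t ≪ p0)
    (hkl : Integrable (fun x => Real.log ((p0t.rnDeriv p0) x).toReal) p0t)
    (Wobs : Ω → ℝ)
    (hW0 : Integrable (fun ω => (Wobs ω) ^ 2) p0)
    (hW0t : Integrable (fun ω => (Wobs ω) ^ 2) p0t)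
    (ν1 : ℝ) (hν1 : 0 < ν1)
    (hmgf : ∀ t : ℝ, 0 < t →
      Integrable (fun ω => Real.exp (t * ((Wobs ω) ^ 2 - ∫ x, (Wobs x) ^ 2 ∂p0))) p0 ∧
      Real.log (∫ ω, Real.exp (t * ((Wobs ω) ^ 2 - ∫ x, (Wobs x) ^ 2 ∂p0)) ∂p0)
        ≤ ν1 * t ^ 2 / 2) :
    variance Wobs p0t ≤ ∫ x, (Wobs x) ^ 2 ∂p0 + Real.sqrt (2 * ν1 * klDiv p0t p0) := by
  refine (variance_le_integral_sq hW0t).trans ?_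
  set m := ∫ x, (Wobs x) ^ 2 ∂p0 with hm
  have hZ : Integrable (fun ω => Wobs ω ^ 2 - m) p0t := hW0t.sub (integrable_const m)
  set a := ∫ ω, (Wobs ω ^ 2 - m) ∂p0t with ha
  have ha' : a = ∫ ω, Wobs ω ^ 2 ∂p0t - m := by
    rw [ha, integral_sub hW0t (integrable_const m)]
    simp
  have hbound : ∀ t : ℝ, 0 < t → t * a ≤ klDiv p0t p0 + ν1 * t ^ 2 / 2 := by
    intro t ht
    obtain ⟨hint, hlog⟩ := hmgf t ht
    have h := integral_le_klDiv_add_log_integral_exp hac hkl (hZ.const_mul t) hint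
    rw [integral_const_mul] at h
    linarith
  suffices a ≤ √(2 * ν1 * klDiv p0t p0) by linarith
  rcases le_or_gt a 0 with hneg | hpos
  · exact hneg.trans (Real.sqrt_nonneg _)
  · -- `t = a / ν1` maximises `t * a - ν1 * t ^ 2 / 2`.
    have h := hbound (a / ν1) (div_pos hpos hν1)
    apply Real.le_sqrt_of_sq_le
    have h1 : a / ν1 * a = a ^ 2 / ν1 := by ring
    have h2 : ν1 * (a / ν1) ^ 2 / 2 = a ^ 2 / ν1 / 2 := by field_simp
    have h3 : a ^ 2 / ν1 ≤ 2 * klDiv p0t p0 := by linarith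
    rw [div_le_iff₀ hν1] at h3
    linarith
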